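/- Let n ≥ 1 be a natural number and let Ω ⊆ ℝⁿ be a nonempty bounded open convex set. For every real γ ≥ 1 and every ε > 0 there exists a constant M > 0 such that for every continuously differentiable function v : ℝⁿ → ℝ one has ∫_Ω v(x)² dx ≤ ε ∫_Ω ‖∇v(x)‖² dx + M (∫_Ω |v(x)|^{2/γ} dx)^γ. -/

import Mathlib

open MeasureTheory

/-!
Fix `x ∈ Ω` and contract `Ω` towards `x` by a small factor `t`. The contracted points `z` see
either `‖v x‖ ≤ 2 ‖v z‖` or `‖v x‖ ≤ 2 ‖v z - v x‖`, and one of the two happens on half of `Ω`, so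
by Markov's inequality `‖v x‖ ^ p` is bounded by the `q`-average of `v` over the contracted set plus
the `p`-average of `v z - v x`. The first average costs a factor `t ^ (-n)`, which is absorbed in
`M`. Integrated over `x`, the second one is at most a multiple of `(t * diam Ω) ^ p * ‖∇v‖ₚ ^ p`
because `v z - v x` is the integral of the derivative along a segment of length at most
`t * diam Ω`. Choosing `t` small makes this at most `ε * ‖∇v‖ₚ ^ p`, with no compactness argument.
-/

section Integrability

variable {X Y : Type*} [PseudoMetricSpace X] [ProperSpace X] [MeasurableSpace X]
  [OpensMeasurableSpace X] [PseudoMetricSpace Y] [ProperSpace Y] [MeasurableSpace Y]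
  [OpensMeasurableSpace Y] {s : Set X} {t : Set Y}

lemma integrableOn_of_continuous_of_isBounded (μ : Measure X) [IsFiniteMeasureOnCompacts μ]
    (hs : Bornology.IsBounded s) {f : X → ℝ} (hf : Continuous f) : IntegrableOn f s μ :=
  (hf.locallyIntegrable.integrableOn_isCompact hs.isCompact_closure).mono_set subset_closure

lemma integrable_prod_restrict_of_continuous_of_isBounded (μ : Measure X) (ν : Measure Y)
    [IsFiniteMeasureOnCompacts μ] [IsFiniteMeasureOnCompacts ν] [SFinite μ] [SFinite ν]
    (hs : Bornology.IsBounded s) (ht : Bornology.IsBounded t) {f : X × Y → ℝ}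
    (hf : Continuous f) : Integrable f ((μ.restrict s).prod (ν.restrict t)) := by
  rw [Measure.prod_restrict]
  exact integrableOn_of_continuous_of_isBounded _ (hs.prod ht) hf

end Integrability

section Markov

variable {α : Type*} [MeasurableSpace α] {μ : Measure α} [IsFiniteMeasure μ] [NeZero μ]

lemma le_two_mul_average_of_half_le_measureReal {f : α → ℝ} (hf : 0 ≤ f) (hfi : Integrable f μ)
    {a : ℝ} (ha : 0 ≤ a) (h : μ.real Set.univ / 2 ≤ μ.real {y | a ≤ f y}) :
    a ≤ 2 * ⨍ y, f y ∂μ := by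
  have hμ : 0 < μ.real Set.univ := measureReal_univ_pos
  have hmarkov : a * (μ.real Set.univ / 2) ≤ ∫ y, f y ∂μ :=
    (mul_le_mul_of_nonneg_left h ha).trans
      (mul_meas_ge_le_integral_of_nonneg (.of_forall hf) hfi a)
  rw [average_eq, smul_eq_mul, inv_mul_eq_div, ← mul_div_assoc, le_div_iff₀ hμ]
  linarith

lemma rpow_half_norm_le_average_add_average {F : Type*} [NormedAddCommGroup F] {f : α → F} {c : F}
    {p q : ℝ} (hp : 0 < p) (hq : 0 < q) (hfq : Integrable (fun y ↦ ‖f y‖ ^ q) μ)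
    (hfp : Integrable (fun y ↦ ‖f y - c‖ ^ p) μ) :
    (‖c‖ / 2) ^ p ≤
      (2 * ⨍ y, ‖f y‖ ^ q ∂μ) ^ (p / q) + 2 * ⨍ y, ‖f y - c‖ ^ p ∂μ := by
  have hq_nonneg : 0 ≤ ⨍ y, ‖f y‖ ^ q ∂μ := integral_nonneg fun _ ↦ by positivity
  have hp_nonneg : 0 ≤ ⨍ y, ‖f y - c‖ ^ p ∂μ := integral_nonneg fun _ ↦ by positivity
  have hcover : (Set.univ : Set α) ⊆
      {y | (‖c‖ / 2) ^ q ≤ ‖f y‖ ^ q} ∪ {y | (‖c‖ / 2) ^ p ≤ ‖f y - c‖ ^ p} := by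
    intro y _
    have htri : ‖c‖ ≤ ‖f y‖ + ‖f y - c‖ := by
      simpa using norm_sub_le (f y) (f y - c)
    rcases le_total (‖c‖ / 2) ‖f y‖ with h | h
    · exact .inl (by dsimp; gcongr)
    · exact .inr (Real.rpow_le_rpow (by positivity) (by linarith) hp.le)
  have hmeasure := (measureReal_mono hcover).trans (measureReal_union_le (μ := μ) _ _)
  rcases le_or_gt (μ.real Set.univ / 2) (μ.real {y | (‖c‖ / 2) ^ q ≤ ‖f y‖ ^ q}) with h | h
  · have hcq : (‖c‖ / 2) ^ q ≤ 2 * ⨍ y, ‖f y‖ ^ q ∂μ :=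
      le_two_mul_average_of_half_le_measureReal (fun _ ↦ by positivity) hfq (by positivity) h
    calc (‖c‖ / 2) ^ p = ((‖c‖ / 2) ^ q) ^ (p / q) := by
          rw [← Real.rpow_mul (by positivity), mul_div_cancel₀ _ hq.ne']
      _ ≤ (2 * ⨍ y, ‖f y‖ ^ q ∂μ) ^ (p / q) := by gcongr
      _ ≤ _ := le_add_of_nonneg_right (by positivity)
  · have hcp : (‖c‖ / 2) ^ p ≤ 2 * ⨍ y, ‖f y - c‖ ^ p ∂μ :=
      le_two_mul_average_of_half_le_measureReal (fun _ ↦ by positivity) hfp (by positivity)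
        (by linarith)
    exact hcp.trans (le_add_of_nonneg_left (by positivity))

end Markov

lemma exists_pos_le_mul_rpow_lt {p a ε : ℝ} (hp : 0 < p) (ha : 0 < a) (hε : 0 < ε) (C : ℝ) :
    ∃ t : ℝ, 0 < t ∧ t ≤ a ∧ C * t ^ p < ε := by
  have hcont : Continuous fun t : ℝ ↦ C * t ^ p := (Real.continuous_rpow_const hp.le).const_mul C
  have hsmall := (hcont.tendsto 0).eventually_lt_const (by simpa [hp.ne'] using hε)
  obtain ⟨t, hlt, ht0, hta⟩ :=
    ((hsmall.filter_mono nhdsWithin_le_nhds).and (Ioc_mem_nhdsGT ha)).exists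
  exact ⟨t, ht0, hta, hlt⟩

lemma mapsTo_homothety_of_starConvex {E : Type*} [AddCommGroup E] [Module ℝ E] {s : Set E} {c : E}
    (hs : StarConvex ℝ c s) {a : ℝ} (ha0 : 0 ≤ a) (ha1 : a ≤ 1) :
    Set.MapsTo (AffineMap.homothety c a) s s := fun x hx ↦ by
  rw [AffineMap.homothety_eq_lineMap]
  exact hs.segment_subset hx (lineMap_mem_segment _ _ _ ⟨ha0, ha1⟩)

section Segment

variable {E F : Type*} [NormedAddCommGroup E] [NormedSpace ℝ E] [NormedAddCommGroup F]
  [NormedSpace ℝ F] {p : ℝ} {v : E → F}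

lemma rpow_setIntegral_Ioc_zero_one_le (hp : 1 ≤ p) {f : ℝ → ℝ} (hf : Continuous f)
    (hf0 : 0 ≤ f) :
    (∫ s in Set.Ioc (0 : ℝ) 1, f s) ^ p ≤ ∫ s in Set.Ioc (0 : ℝ) 1, f s ^ p := by
  have hp0 : 0 ≤ p := by linarith
  have : IsProbabilityMeasure (volume.restrict (Set.Ioc (0 : ℝ) 1)) := ⟨by simp⟩
  exact (convexOn_rpow hp).map_integral_le (Real.continuous_rpow_const hp0).continuousOn
    isClosed_Ici (.of_forall hf0)
    (integrableOn_of_continuous_of_isBounded _ (Metric.isBounded_Ioc 0 1) hf)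
    (integrableOn_of_continuous_of_isBounded _ (Metric.isBounded_Ioc 0 1)
      (hf.rpow_const fun _ ↦ .inr hp0))

lemma continuous_norm_fderiv_lineMap (hv : ContDiff ℝ 1 v) (x z : E) :
    Continuous fun s : ℝ ↦ ‖fderiv ℝ v (AffineMap.lineMap x z s)‖ :=
  ((hv.continuous_fderiv one_ne_zero).comp AffineMap.lineMap_continuous).norm

lemma norm_sub_le_setIntegral_norm_fderiv_lineMap (hv : ContDiff ℝ 1 v) (x z : E) :
    ‖v z - v x‖ ≤
      ∫ s in Set.Ioc (0 : ℝ) 1, ‖fderiv ℝ v (AffineMap.lineMap x z s)‖ * ‖z - x‖ := by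
  have hderiv (s : ℝ) : HasDerivAt (fun r : ℝ ↦ v (AffineMap.lineMap x z r))
      (fderiv ℝ v (AffineMap.lineMap x z s) (z - x)) s :=
    (hv.differentiable one_ne_zero _).hasFDerivAt.comp_hasDerivAt s AffineMap.hasDerivAt_lineMap
  have hdiff : Differentiable ℝ fun r : ℝ ↦ v (AffineMap.lineMap x z r) :=
    fun s ↦ (hderiv s).differentiableAt
  have h := norm_sub_le_integral_of_norm_deriv_le_of_le zero_le_one hdiff.continuous.continuousOn
    hdiff.differentiableOn
    (.of_forall fun s _ ↦ (hderiv s).deriv ▸ ContinuousLinearMap.le_opNorm _ _)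
    (((continuous_norm_fderiv_lineMap hv x z).mul_const _).intervalIntegrable 0 1)
  simpa only [AffineMap.lineMap_apply_one, AffineMap.lineMap_apply_zero,
    intervalIntegral.integral_of_le zero_le_one] using h

lemma rpow_norm_sub_le_setIntegral_rpow_norm_fderiv_lineMap (hp : 1 ≤ p) (hv : ContDiff ℝ 1 v)
    (x z : E) :
    ‖v z - v x‖ ^ p ≤
      ‖z - x‖ ^ p * ∫ s in Set.Ioc (0 : ℝ) 1, ‖fderiv ℝ v (AffineMap.lineMap x z s)‖ ^ p := by
  calc ‖v z - v x‖ ^ p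
      ≤ (∫ s in Set.Ioc (0 : ℝ) 1, ‖fderiv ℝ v (AffineMap.lineMap x z s)‖ * ‖z - x‖) ^ p := by
        gcongr
        exact norm_sub_le_setIntegral_norm_fderiv_lineMap hv x z
    _ ≤ ∫ s in Set.Ioc (0 : ℝ) 1, (‖fderiv ℝ v (AffineMap.lineMap x z s)‖ * ‖z - x‖) ^ p :=
        rpow_setIntegral_Ioc_zero_one_le hp ((continuous_norm_fderiv_lineMap hv x z).mul_const _)
          fun _ ↦ by positivity
    _ = ‖z - x‖ ^ p * ∫ s in Set.Ioc (0 : ℝ) 1, ‖fderiv ℝ v (AffineMap.lineMap x z s)‖ ^ p := by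
        simp only [Real.mul_rpow (norm_nonneg _) (norm_nonneg _), integral_mul_const]
        rw [mul_comm]

lemma rpow_norm_lineMap_sub_le (hp : 1 ≤ p) (hv : ContDiff ℝ 1 v) (x y : E) {t : ℝ}
    (ht : 0 ≤ t) :
    ‖v (AffineMap.lineMap x y t) - v x‖ ^ p ≤ (t * dist x y) ^ p *
      ∫ r in Set.Ioc (0 : ℝ) 1, ‖fderiv ℝ v (AffineMap.lineMap x y (r * t))‖ ^ p := by
  have h := rpow_norm_sub_le_setIntegral_rpow_norm_fderiv_lineMap hp hv x
    (AffineMap.lineMap x y t)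
  rw [← dist_eq_norm (AffineMap.lineMap x y t) x, dist_lineMap_left,
    Real.norm_of_nonneg ht] at h
  simpa only [AffineMap.lineMap_lineMap_right] using h

end Segment

section ConvexDomain

open Module

variable {E F : Type*} [NormedAddCommGroup E] [NormedSpace ℝ E] [FiniteDimensional ℝ E]
  [MeasurableSpace E] [BorelSpace E] {μ : Measure E} [μ.IsAddHaarMeasure]
  [NormedAddCommGroup F] {s : Set E} {p q t : ℝ} {v : E → F}

lemma setIntegral_comp_homothety_le {c : E} {a : ℝ} (ha : 0 < a) (hs : NullMeasurableSet s μ)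
    (hmaps : Set.MapsTo (AffineMap.homothety c a) s s) {f : E → ℝ} (hf0 : 0 ≤ f)
    (hf : IntegrableOn f s μ) :
    ∫ x in s, f (AffineMap.homothety c a x) ∂μ ≤ (a ^ finrank ℝ E)⁻¹ * ∫ x in s, f x ∂μ := by
  set g : E → ℝ := fun x ↦ s.indicator f (x + (c - a • c)) with hg
  have hhomothety (x : E) : s.indicator f (AffineMap.homothety c a x) = g (a • x) := by
    simp only [hg, AffineMap.homothety_apply, vsub_eq_sub, vadd_eq_add]
    congr 1
    module
  have hgi : Integrable (fun x ↦ g (a • x)) μ :=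
    (integrable_comp_smul_iff μ g ha.ne').2 ((hf.integrable_indicator₀ hs).comp_add_right _)
  calc ∫ x in s, f (AffineMap.homothety c a x) ∂μ
      = ∫ x in s, g (a • x) ∂μ := by
        refine integral_congr_ae ?_
        filter_upwards [ae_restrict_mem₀ hs] with x hx
        rw [← hhomothety, Set.indicator_of_mem (hmaps hx)]
    _ ≤ ∫ x, g (a • x) ∂μ :=
        setIntegral_le_integral hgi
          (.of_forall fun _ ↦ Set.indicator_nonneg (fun x _ ↦ hf0 x) _)
    _ = (a ^ finrank ℝ E)⁻¹ * ∫ x in s, f x ∂μ := by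
        rw [Measure.integral_comp_smul, abs_of_pos (by positivity), smul_eq_mul,
          integral_add_right_eq_self (s.indicator f), integral_indicator₀ hs]

lemma rpow_half_norm_le_setIntegral_add_setIntegral (hp : 0 < p) (hq : 0 < q)
    (hs : NullMeasurableSet s μ) (hbdd : Bornology.IsBounded s) (hμs : μ s ≠ 0) {x : E}
    (hstar : StarConvex ℝ x s) (hv : Continuous v) (ht0 : 0 < t) (ht : t ≤ 1) :
    (‖v x‖ / 2) ^ p ≤
      (2 * ((μ.real s)⁻¹ * ((t ^ finrank ℝ E)⁻¹ * ∫ y in s, ‖v y‖ ^ q ∂μ))) ^ (p / q) +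
        2 * ((μ.real s)⁻¹ * ∫ y in s, ‖v (AffineMap.lineMap x y t) - v x‖ ^ p ∂μ) := by
  have : Fact (μ s < ⊤) := ⟨hbdd.measure_lt_top⟩
  have : NeZero (μ.restrict s) := ⟨Measure.restrict_eq_zero.not.2 hμs⟩
  have hvq : Continuous fun y ↦ ‖v y‖ ^ q := hv.norm.rpow_const fun _ ↦ .inr hq.le
  have hmaps : Set.MapsTo (AffineMap.homothety x t) s s :=
    mapsTo_homothety_of_starConvex hstar ht0.le ht
  have hcontract : ∫ y in s, ‖v (AffineMap.lineMap x y t)‖ ^ q ∂μ ≤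
      (t ^ finrank ℝ E)⁻¹ * ∫ y in s, ‖v y‖ ^ q ∂μ := by
    simpa only [AffineMap.homothety_eq_lineMap] using
      setIntegral_comp_homothety_le ht0 hs hmaps (fun _ ↦ by positivity)
        (integrableOn_of_continuous_of_isBounded μ hbdd hvq)
  have hmarkov := rpow_half_norm_le_average_add_average (μ := μ.restrict s) (c := v x)
    (f := fun y ↦ v (AffineMap.lineMap x y t)) hp hq
    (integrableOn_of_continuous_of_isBounded μ hbdd
      (Continuous.rpow_const (by fun_prop) fun _ ↦ .inr hq.le))
    (integrableOn_of_continuous_of_isBounded μ hbdd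
      (Continuous.rpow_const (by fun_prop) fun _ ↦ .inr hp.le))
  simp only [setAverage_eq, smul_eq_mul] at hmarkov
  refine hmarkov.trans ?_
  gcongr

lemma integrable_rpow_norm_sub_lineMap (μ : Measure E) [IsFiniteMeasureOnCompacts μ] [SFinite μ]
    (hp : 0 ≤ p) (hbdd : Bornology.IsBounded s) (hv : Continuous v) (t : ℝ) :
    Integrable (fun z : E × E ↦ ‖v (AffineMap.lineMap z.1 z.2 t) - v z.1‖ ^ p)
      ((μ.restrict s).prod (μ.restrict s)) :=
  integrable_prod_restrict_of_continuous_of_isBounded μ μ hbdd hbdd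
    (Continuous.rpow_const (by fun_prop) fun _ ↦ .inr hp)

variable [NormedSpace ℝ F]

lemma setIntegral_rpow_norm_fderiv_lineMap_le (hp : 0 ≤ p) (hs : NullMeasurableSet s μ)
    (hbdd : Bornology.IsBounded s) {y : E} (hstar : StarConvex ℝ y s) (hv : ContDiff ℝ 1 v)
    {r : ℝ} (hr0 : 0 ≤ r) (hr : r ≤ 1 / 2) :
    ∫ x in s, ‖fderiv ℝ v (AffineMap.lineMap x y r)‖ ^ p ∂μ ≤
      2 ^ finrank ℝ E * ∫ x in s, ‖fderiv ℝ v x‖ ^ p ∂μ := by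
  have hcont : Continuous fun x ↦ ‖fderiv ℝ v x‖ ^ p :=
    (hv.continuous_fderiv one_ne_zero).norm.rpow_const fun _ ↦ .inr hp
  have hmaps : Set.MapsTo (AffineMap.homothety y (1 - r)) s s :=
    mapsTo_homothety_of_starConvex hstar (by linarith) (by linarith)
  have hle : ((1 - r) ^ finrank ℝ E)⁻¹ ≤ 2 ^ finrank ℝ E := by
    rw [← inv_pow]
    gcongr
    · exact inv_nonneg.2 (by linarith)
    · exact inv_le_of_inv_le₀ (by norm_num) (by linarith)
  calc ∫ x in s, ‖fderiv ℝ v (AffineMap.lineMap x y r)‖ ^ p ∂μ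
      = ∫ x in s, ‖fderiv ℝ v (AffineMap.homothety y (1 - r) x)‖ ^ p ∂μ := by
        simp only [AffineMap.homothety_eq_lineMap, AffineMap.lineMap_apply_one_sub]
    _ ≤ ((1 - r) ^ finrank ℝ E)⁻¹ * ∫ x in s, ‖fderiv ℝ v x‖ ^ p ∂μ :=
        setIntegral_comp_homothety_le (by linarith) hs hmaps (fun _ ↦ by positivity)
          (integrableOn_of_continuous_of_isBounded μ hbdd hcont)
    _ ≤ _ := by gcongr

lemma setIntegral_rpow_norm_sub_lineMap_le (hp : 1 ≤ p) (hs : NullMeasurableSet s μ)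
    (hbdd : Bornology.IsBounded s) {y : E} (hy : y ∈ s) (hstar : StarConvex ℝ y s)
    (hv : ContDiff ℝ 1 v) (ht0 : 0 ≤ t) (ht : t ≤ 1 / 2) :
    ∫ x in s, ‖v (AffineMap.lineMap x y t) - v x‖ ^ p ∂μ ≤
      (t * Metric.diam s) ^ p * (2 ^ finrank ℝ E * ∫ x in s, ‖fderiv ℝ v x‖ ^ p ∂μ) := by
  have hp0 : 0 ≤ p := by linarith
  have hvc := hv.continuous
  have hsub : Continuous fun x ↦ ‖v (AffineMap.lineMap x y t) - v x‖ ^ p :=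
    Continuous.rpow_const (by fun_prop) fun _ ↦ .inr hp0
  have hspeed : Continuous fun z : E × ℝ ↦
      ‖fderiv ℝ v (AffineMap.lineMap z.1 y (z.2 * t))‖ ^ p :=
    Continuous.rpow_const (by fun_prop) fun _ ↦ .inr hp0
  have hint := integrable_prod_restrict_of_continuous_of_isBounded μ volume hbdd
    (Metric.isBounded_Ioc (0 : ℝ) 1) hspeed
  have hpoint (x : E) (hx : x ∈ s) : ‖v (AffineMap.lineMap x y t) - v x‖ ^ p ≤
      (t * Metric.diam s) ^ p *
        ∫ r in Set.Ioc (0 : ℝ) 1, ‖fderiv ℝ v (AffineMap.lineMap x y (r * t))‖ ^ p := by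
    refine (rpow_norm_lineMap_sub_le hp hv x y ht0).trans ?_
    gcongr
    exact Metric.dist_le_diam_of_mem hbdd hx hy
  calc ∫ x in s, ‖v (AffineMap.lineMap x y t) - v x‖ ^ p ∂μ
      ≤ ∫ x in s, (t * Metric.diam s) ^ p *
          (∫ r in Set.Ioc (0 : ℝ) 1, ‖fderiv ℝ v (AffineMap.lineMap x y (r * t))‖ ^ p) ∂μ :=
        setIntegral_mono_on₀ (integrableOn_of_continuous_of_isBounded μ hbdd hsub)
          (hint.integral_prod_left.const_mul _) hs hpoint
    _ = (t * Metric.diam s) ^ p *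
          ∫ r in Set.Ioc (0 : ℝ) 1,
            ∫ x in s, ‖fderiv ℝ v (AffineMap.lineMap x y (r * t))‖ ^ p ∂μ := by
        rw [integral_const_mul, integral_integral_swap hint]
    _ ≤ (t * Metric.diam s) ^ p * ∫ _ in Set.Ioc (0 : ℝ) 1,
          2 ^ finrank ℝ E * ∫ x in s, ‖fderiv ℝ v x‖ ^ p ∂μ := by
        refine mul_le_mul_of_nonneg_left ?_ (by positivity)
        refine setIntegral_mono_on hint.integral_prod_right (integrable_const _)
          measurableSet_Ioc fun r hr ↦ ?_
        exact setIntegral_rpow_norm_fderiv_lineMap_le hp0 hs hbdd hstar hv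
          (mul_nonneg hr.1.le ht0) ((mul_le_of_le_one_left ht0 hr.2).trans ht)
    _ = _ := by simp

lemma setIntegral_setIntegral_rpow_norm_sub_lineMap_le (hp : 1 ≤ p) (hconv : Convex ℝ s)
    (hbdd : Bornology.IsBounded s) (hv : ContDiff ℝ 1 v) (ht0 : 0 ≤ t) (ht : t ≤ 1 / 2) :
    ∫ x in s, ∫ y in s, ‖v (AffineMap.lineMap x y t) - v x‖ ^ p ∂μ ∂μ ≤
      μ.real s *
        ((t * Metric.diam s) ^ p * (2 ^ finrank ℝ E * ∫ x in s, ‖fderiv ℝ v x‖ ^ p ∂μ)) := by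
  have hs := hconv.nullMeasurableSet μ
  have hint := integrable_rpow_norm_sub_lineMap μ (by linarith) hbdd hv.continuous t (p := p)
  rw [integral_integral_swap hint, ← smul_eq_mul, ← setIntegral_const]
  exact setIntegral_mono_on₀ hint.integral_prod_right
    (integrableOn_of_continuous_of_isBounded μ hbdd continuous_const) hs
    fun y hy ↦ setIntegral_rpow_norm_sub_lineMap_le hp hs hbdd hy (hconv hy) hv ht0 ht

theorem setIntegral_rpow_norm_le_add (hp : 1 ≤ p) (hq : 0 < q) (hconv : Convex ℝ s)
    (hbdd : Bornology.IsBounded s) (hμs : μ s ≠ 0) (hv : ContDiff ℝ 1 v) (ht0 : 0 < t)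
    (ht : t ≤ 1 / 2) :
    ∫ x in s, (‖v x‖ / 2) ^ p ∂μ ≤
      μ.real s *
          (2 * ((μ.real s)⁻¹ * ((t ^ finrank ℝ E)⁻¹ * ∫ x in s, ‖v x‖ ^ q ∂μ))) ^ (p / q) +
        2 * ((t * Metric.diam s) ^ p * (2 ^ finrank ℝ E * ∫ x in s, ‖fderiv ℝ v x‖ ^ p ∂μ)) := by
  have hp0 : 0 < p := by linarith
  have hs := hconv.nullMeasurableSet μ
  have hm : 0 < μ.real s := ENNReal.toReal_pos hμs hbdd.measure_lt_top.ne
  have hint := (integrable_rpow_norm_sub_lineMap μ hp0.le hbdd hv.continuous t).integral_prod_left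
  have hvp : Continuous fun x ↦ (‖v x‖ / 2) ^ p :=
    (hv.continuous.norm.div_const 2).rpow_const fun _ ↦ .inr hp0.le
  set A := (2 * ((μ.real s)⁻¹ * ((t ^ finrank ℝ E)⁻¹ * ∫ x in s, ‖v x‖ ^ q ∂μ))) ^ (p / q)
  have hA : IntegrableOn (fun _ ↦ A) s μ :=
    integrableOn_of_continuous_of_isBounded μ hbdd continuous_const
  calc ∫ x in s, (‖v x‖ / 2) ^ p ∂μ
      ≤ ∫ x in s, (A + 2 * ((μ.real s)⁻¹ *
          ∫ y in s, ‖v (AffineMap.lineMap x y t) - v x‖ ^ p ∂μ)) ∂μ :=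
        setIntegral_mono_on₀ (integrableOn_of_continuous_of_isBounded μ hbdd hvp)
          (hA.add ((hint.const_mul _).const_mul _)) hs fun x hx ↦
            rpow_half_norm_le_setIntegral_add_setIntegral hp0 hq hs hbdd hμs (hconv hx)
              hv.continuous ht0 (ht.trans (by norm_num))
    _ = μ.real s * A + 2 * ((μ.real s)⁻¹ *
          ∫ x in s, ∫ y in s, ‖v (AffineMap.lineMap x y t) - v x‖ ^ p ∂μ ∂μ) := by
        rw [integral_add hA ((hint.const_mul _).const_mul _), setIntegral_const, smul_eq_mul,
          integral_const_mul, integral_const_mul]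
    _ ≤ μ.real s * A + 2 * ((μ.real s)⁻¹ * (μ.real s * ((t * Metric.diam s) ^ p *
          (2 ^ finrank ℝ E * ∫ x in s, ‖fderiv ℝ v x‖ ^ p ∂μ)))) := by
        gcongr
        exact setIntegral_setIntegral_rpow_norm_sub_lineMap_le hp hconv hbdd hv ht0.le ht
    _ = _ := by rw [inv_mul_cancel_left₀ hm.ne']

theorem stmt_0_general (μ : Measure E) [μ.IsAddHaarMeasure] (hconv : Convex ℝ s)
    (hbdd : Bornology.IsBounded s) (hp : 1 ≤ p) (hq : 0 < q) {ε : ℝ} (hε : 0 < ε) :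
    ∃ M : ℝ, 0 < M ∧ ∀ v : E → F, ContDiff ℝ 1 v →
      ∫ x in s, ‖v x‖ ^ p ∂μ ≤
        ε * (∫ x in s, ‖fderiv ℝ v x‖ ^ p ∂μ) +
          M * (∫ x in s, ‖v x‖ ^ q ∂μ) ^ (p / q) := by
  have hp0 : 0 < p := by linarith
  rcases eq_or_ne (μ s) 0 with hμs | hμs
  · exact ⟨1, one_pos, fun v _ ↦ by
      simp [setIntegral_measure_zero _ hμs, (div_pos hp0 hq).ne']⟩
  have hm : 0 < μ.real s := ENNReal.toReal_pos hμs hbdd.measure_lt_top.ne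
  obtain ⟨t, ht0, ht, htε⟩ := exists_pos_le_mul_rpow_lt hp0 one_half_pos hε
    (2 ^ p * (2 * (Metric.diam s ^ p * 2 ^ finrank ℝ E)))
  refine ⟨2 ^ p * (μ.real s * (2 * ((μ.real s)⁻¹ * (t ^ finrank ℝ E)⁻¹)) ^ (p / q)),
    by positivity, fun v hv ↦ ?_⟩
  have hq_nonneg : 0 ≤ ∫ x in s, ‖v x‖ ^ q ∂μ := integral_nonneg fun _ ↦ by positivity
  have hhalf : ∫ x in s, ‖v x‖ ^ p ∂μ = 2 ^ p * ∫ x in s, (‖v x‖ / 2) ^ p ∂μ := by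
    rw [← integral_const_mul]
    congr with x
    rw [← Real.mul_rpow (by norm_num) (by positivity), mul_div_cancel₀ _ two_ne_zero]
  have hmain := setIntegral_rpow_norm_le_add hp hq hconv hbdd hμs hv ht0 ht
  simp only [← mul_assoc] at hmain
  rw [Real.mul_rpow (by positivity) hq_nonneg, Real.mul_rpow ht0.le Metric.diam_nonneg] at hmain
  calc ∫ x in s, ‖v x‖ ^ p ∂μ
      = 2 ^ p * ∫ x in s, (‖v x‖ / 2) ^ p ∂μ := hhalf
    _ ≤ 2 ^ p * (2 * (Metric.diam s ^ p * 2 ^ finrank ℝ E)) * t ^ p *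
            (∫ x in s, ‖fderiv ℝ v x‖ ^ p ∂μ) +
          2 ^ p * (μ.real s * (2 * ((μ.real s)⁻¹ * (t ^ finrank ℝ E)⁻¹)) ^ (p / q)) *
            (∫ x in s, ‖v x‖ ^ q ∂μ) ^ (p / q) := by
        grw [hmain]
        apply le_of_eq
        ring_nf
    _ ≤ _ := by gcongr

end ConvexDomain

/-- Lemma 3.3, inequality (3.4): interpolation inequality
`‖v‖₂² ≤ ε ‖∇v‖₂² + M ‖|v|^(2/γ)‖₁^γ` on a bounded convex domain. -/
theorem stmt_0 (n : ℕ) (hn : 1 ≤ n) (Ω : Set (EuclideanSpace ℝ (Fin n)))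
    (hne : Ω.Nonempty) (hbd : Bornology.IsBounded Ω) (hop : IsOpen Ω)
    (hconv : Convex ℝ Ω) (γ : ℝ) (hγ : 1 ≤ γ) (ε : ℝ) (hε : 0 < ε) :
    ∃ M : ℝ, 0 < M ∧ ∀ v : EuclideanSpace ℝ (Fin n) → ℝ, ContDiff ℝ 1 v →
      (∫ x in Ω, (v x) ^ 2) ≤
        ε * (∫ x in Ω, ‖gradient v x‖ ^ 2) +
          M * (∫ x in Ω, |v x| ^ (2 / γ)) ^ γ := by
  obtain ⟨M, hM, h⟩ := stmt_0_general (F := ℝ) (p := 2) (q := 2 / γ) volume hconv hbd one_le_two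
    (by positivity) hε
  exact ⟨M, hM, fun v hv ↦ by simpa [gradient, div_div_cancel₀] using h v hv⟩
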